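/- Let (C, Ω, 𝔓) be a measurable spined category. Then both the triangulation functor Δ and the chordal triangulation functor Δ^ch are S-functors over C: each is monotone along morphisms, satisfies Δ[Ω_n] = n (resp. Δ^ch[Ω_n] = n) for all n ∈ ℕ, and satisfies Δ[𝔓(a,b)] = max(Δ[A], Δ[B]) (resp. Δ^ch[𝔓(a,b)] = max(Δ^ch[A], Δ^ch[B])) for every span A ←a— Ω_n —b→ B in C. -/

import Mathlib

open CategoryTheory

universe u v

/-- The data of a spine and proxy pushout operation on a category. -/
structure SpineData (C : Type u) [Category.{v} C] where
  /-- the spine, a functor from the discrete category ℕ -/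
  Ω : ℕ → C
  /-- proxy pushout object of a span out of a spine object -/
  P : ∀ {n : ℕ} {G H : C}, (Ω n ⟶ G) → (Ω n ⟶ H) → C
  /-- left structure morphism of the proxy pushout cocone -/
  inl : ∀ {n : ℕ} {G H : C} (g : Ω n ⟶ G) (h : Ω n ⟶ H), G ⟶ P g h
  /-- right structure morphism of the proxy pushout cocone -/
  inr : ∀ {n : ℕ} {G H : C} (g : Ω n ⟶ G) (h : Ω n ⟶ H), H ⟶ P g h

variable {C : Type u} [Category.{v} C]

/-- (SC1): every object admits a morphism to some spine object. -/
def SpineData.SC1 (D : SpineData C) : Prop :=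
  ∀ X : C, ∃ n : ℕ, Nonempty (X ⟶ D.Ω n)

/-- (SC2): unique compatibility morphisms between proxy pushouts of extended spans. -/
def SpineData.SC2 (D : SpineData C) : Prop :=
  ∀ {n : ℕ} {G H G' H' : C} (g : D.Ω n ⟶ G) (h : D.Ω n ⟶ H) (g' : G ⟶ G') (h' : H ⟶ H'),
    ∃! m : D.P g h ⟶ D.P (g ≫ g') (h ≫ h'),
      D.inl g h ≫ m = g' ≫ D.inl (g ≫ g') (h ≫ h') ∧
      D.inr g h ≫ m = h' ≫ D.inr (g ≫ g') (h ≫ h')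

/-- A spined category is a category equipped with spine data satisfying SC1 and SC2. -/
def SpineData.IsSpined (D : SpineData C) : Prop := D.SC1 ∧ D.SC2

/-- An S-functor over a spined category `(C, Ω, 𝔓)`: a spinal functor to the spined
category `Nat` (the poset `(ℕ, ≤)` with spine `n ↦ n` and proxy pushouts given by maxima).
Equivalently: a monotone map preserving the spine and proxy pushouts. -/
structure SFunctor (D : SpineData C) where
  val : C → ℕ
  mono : ∀ {X Y : C}, (X ⟶ Y) → val X ≤ val Y
  spine : ∀ n : ℕ, val (D.Ω n) = n
  pp : ∀ {n : ℕ} {G H : C} (g : D.Ω n ⟶ G) (h : D.Ω n ⟶ H),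
    val (D.P g h) = max (val G) (val H)

/-- An object is pseudo-chordal if all S-functors agree on it. -/
def PseudoChordal (D : SpineData C) (X : C) : Prop :=
  ∀ F G : SFunctor D, F.val X = G.val X

/-- The chordal objects: the smallest collection of objects containing the spine and
closed under proxy pushouts. -/
inductive Chordal (D : SpineData C) : C → Prop
  | spine (n : ℕ) : Chordal D (D.Ω n)
  | push {n : ℕ} {A B : C} (a : D.Ω n ⟶ A) (b : D.Ω n ⟶ B) :
      Chordal D A → Chordal D B → Chordal D (D.P a b)

/-- The set of widths of pseudo-chordal completions of `X`: `k` is such a width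
iff there is a morphism `X ⟶ H` with `H` pseudo-chordal and every S-functor takes
the value `k` on `H`. -/
def pcWidths (D : SpineData C) (X : C) : Set ℕ :=
  {k | ∃ H : C, Nonempty (X ⟶ H) ∧ PseudoChordal D H ∧ ∀ F : SFunctor D, F.val H = k}

/-- The set of widths of chordal completions of `X`. -/
def chWidths (D : SpineData C) (X : C) : Set ℕ :=
  {k | ∃ H : C, Nonempty (X ⟶ H) ∧ Chordal D H ∧ ∀ F : SFunctor D, F.val H = k}

/-- The triangulation number: minimum width of a pseudo-chordal completion. -/
noncomputable def tri (D : SpineData C) (X : C) : ℕ := sInf (pcWidths D X)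

/-- The chordal triangulation number: minimum width of a chordal completion. -/
noncomputable def triCh (D : SpineData C) (X : C) : ℕ := sInf (chWidths D X)

/-- The order of an object: least `n` admitting a morphism `X ⟶ Ω n`. -/
noncomputable def ordOf (D : SpineData C) (X : C) : ℕ := sInf {n : ℕ | Nonempty (X ⟶ D.Ω n)}

/-- Generic argument for a class of objects containing the spine, closed under proxy pushouts
and contained in the pseudo-chordal objects. -/
theorem generic_triangulation
    {C : Type u} [Category.{v} C] (D : SpineData C) (hD : D.IsSpined)
    (F₀ : SFunctor D) (Q : C → Prop) (hQs : ∀ n, Q (D.Ω n))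
    (hQp : ∀ {n : ℕ} {A B : C} (a : D.Ω n ⟶ A) (b : D.Ω n ⟶ B), Q A → Q B → Q (D.P a b))
    (W : C → Set ℕ)
    (hW : ∀ X, W X = {k | ∃ H : C, Nonempty (X ⟶ H) ∧ Q H ∧ ∀ F : SFunctor D, F.val H = k}) :
    (∀ {X Y : C}, (X ⟶ Y) → sInf (W X) ≤ sInf (W Y)) ∧
      (∀ n : ℕ, sInf (W (D.Ω n)) = n) ∧
      (∀ {n : ℕ} {A B : C} (a : D.Ω n ⟶ A) (b : D.Ω n ⟶ B),
        sInf (W (D.P a b)) = max (sInf (W A)) (sInf (W B))) := by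
  have hne : ∀ X, (W X).Nonempty := by
    intro X
    obtain ⟨n, hn⟩ := hD.1 X
    rw [hW]
    exact ⟨n, D.Ω n, hn, hQs n, fun F => F.spine n⟩
  have hmono : ∀ {X Y : C}, (X ⟶ Y) → sInf (W X) ≤ sInf (W Y) := by
    intro X Y f
    have h := Nat.sInf_mem (hne Y)
    apply Nat.sInf_le
    generalize sInf (W Y) = k at h ⊢
    rw [hW] at h ⊢
    obtain ⟨H, ⟨g⟩, hq, hF⟩ := h
    exact ⟨H, ⟨f ≫ g⟩, hq, hF⟩
  refine ⟨hmono, ?_, ?_⟩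
  · intro n
    apply le_antisymm
    · apply Nat.sInf_le
      rw [hW]
      exact ⟨D.Ω n, ⟨𝟙 _⟩, hQs n, fun F => F.spine n⟩
    · have h := Nat.sInf_mem (hne (D.Ω n))
      generalize sInf (W (D.Ω n)) = k at h ⊢
      rw [hW] at h
      obtain ⟨H, ⟨g⟩, hq, hF⟩ := h
      have h1 := F₀.mono g
      rwa [F₀.spine, hF] at h1
  · intro n A B a b
    apply le_antisymm
    · have hA := Nat.sInf_mem (hne A)
      have hB := Nat.sInf_mem (hne B)
      apply Nat.sInf_le
      generalize sInf (W A) = k at hA ⊢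
      generalize sInf (W B) = l at hB ⊢
      rw [hW] at hA hB ⊢
      obtain ⟨H, ⟨g⟩, hq, hF⟩ := hA
      obtain ⟨K, ⟨g'⟩, hq', hF'⟩ := hB
      obtain ⟨m, -, -⟩ := hD.2 a b g g'
      exact ⟨D.P (a ≫ g) (b ≫ g'), ⟨m⟩, hQp _ _ hq hq', fun F => by rw [F.pp, hF, hF']⟩
    · exact max_le (hmono (D.inl a b)) (hmono (D.inr a b))

/-- in a measurable spined category, both the triangulation functor Δ and
the chordal triangulation functor Δ^ch are S-functors: monotone along morphisms, taking
the value `n` on `Ω n`, and taking proxy pushouts to maxima. -/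
theorem triangulation_is_SFunctor
    {C : Type u} [Category.{v} C] (D : SpineData C) (hD : D.IsSpined)
    (hmeas : Nonempty (SFunctor D)) :
    ((∀ {X Y : C}, (X ⟶ Y) → tri D X ≤ tri D Y) ∧
      (∀ n : ℕ, tri D (D.Ω n) = n) ∧
      (∀ {n : ℕ} {A B : C} (a : D.Ω n ⟶ A) (b : D.Ω n ⟶ B),
        tri D (D.P a b) = max (tri D A) (tri D B))) ∧
    ((∀ {X Y : C}, (X ⟶ Y) → triCh D X ≤ triCh D Y) ∧
      (∀ n : ℕ, triCh D (D.Ω n) = n) ∧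
      (∀ {n : ℕ} {A B : C} (a : D.Ω n ⟶ A) (b : D.Ω n ⟶ B),
        triCh D (D.P a b) = max (triCh D A) (triCh D B))) := by
  obtain ⟨F₀⟩ := hmeas
  constructor
  · exact generic_triangulation D hD F₀ (PseudoChordal D)
      (fun n F G => by rw [F.spine, G.spine])
      (fun a b hA hB F G => by rw [F.pp, G.pp, hA F G, hB F G])
      (pcWidths D) (fun _ => rfl)
  · exact generic_triangulation D hD F₀ (Chordal D) Chordal.spine
      (fun a b hA hB => Chordal.push a b hA hB) (chWidths D) (fun _ => rfl)
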